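/- Let q > 1, c ≥ 1 and p₀ > q satisfy ((p₀−q)/p₀) · (p₀/(p₀−1))^q · c = 1. Define g(t) = t^{−1/p₀} for t ∈ (0,1]. Then g is non-increasing, g and g^q are integrable on (0,1], (1/t)∫₀^t g(u)^q du = c · ((1/t)∫₀^t g(u) du)^q for every t ∈ (0,1], and ∫₀¹ g(t)^{p₀} dt = +∞. -/

import Mathlib

/-! For `s > -1` the average of `u ^ s` over `(0, t]` is `t ^ s / (s + 1)`
(`hardyAvg_rpow`). Taking `s = -1/p₀` and `s = -q/p₀`, the power of `t` is the same on both
sides of the reverse Hölder relation, which reduces to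
`p₀ / (p₀ - q) = c * (p₀ / (p₀ - 1)) ^ q`, i.e. to the equation defining `p₀`. Finally
`g ^ p₀ = t⁻¹`, which is not integrable at `0`. -/

open MeasureTheory Set
open scoped ENNReal NNReal

/-- The average `(1/t) ∫₀^t g(u) du` of a nonnegative function `g` over `(0, t]`,
taken with values in `[0, ∞]`. -/
noncomputable def hardyAvg (g : ℝ → ℝ≥0) (t : ℝ) : ℝ≥0∞ :=
  (ENNReal.ofReal t)⁻¹ * ∫⁻ u in Set.Ioc (0 : ℝ) t, (g u : ℝ≥0∞)

lemma lintegral_Ioc_rpow {s t : ℝ} (hs : -1 < s) (ht : 0 < t) :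
    ∫⁻ u in Ioc (0 : ℝ) t, ENNReal.ofReal (u ^ s) = ENNReal.ofReal (t ^ (s + 1) / (s + 1)) := by
  have hi : IntegrableOn (fun u : ℝ => u ^ s) (Ioc 0 t) :=
    (intervalIntegrable_iff_integrableOn_Ioc_of_le ht.le).1
      (intervalIntegral.intervalIntegrable_rpow' hs)
  rw [← ofReal_integral_eq_lintegral_ofReal hi, ← intervalIntegral.integral_of_le ht.le,
    integral_rpow (Or.inl hs), Real.zero_rpow (by linarith), sub_zero]
  filter_upwards [ae_restrict_mem measurableSet_Ioc] with u hu
  exact Real.rpow_nonneg hu.1.le s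

lemma hardyAvg_rpow {s t : ℝ} (hs : -1 < s) (ht : 0 < t) {g : ℝ → ℝ≥0}
    (hg : ∀ u, 0 < u → (g u : ℝ≥0∞) = ENNReal.ofReal (u ^ s)) :
    hardyAvg g t = ENNReal.ofReal (t ^ s / (s + 1)) := by
  rw [hardyAvg, setLIntegral_congr_fun measurableSet_Ioc (fun u hu => hg u hu.1),
    lintegral_Ioc_rpow hs ht, ← ENNReal.ofReal_inv_of_pos ht,
    ← ENNReal.ofReal_mul (inv_nonneg.2 ht.le), Real.rpow_add_one ht.ne']
  congr 1
  field_simp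

lemma lintegral_Ioc_inv_eq_top : ∫⁻ u in Ioc (0 : ℝ) 1, ENNReal.ofReal (u⁻¹) = ⊤ := by
  by_contra h
  have hi : IntegrableOn (fun u : ℝ => u⁻¹) (Ioc 0 1) := by
    refine ⟨by fun_prop, ?_⟩
    rw [hasFiniteIntegral_iff_ofReal]
    · exact lt_top_iff_ne_top.2 h
    · filter_upwards [ae_restrict_mem measurableSet_Ioc] with u hu
      exact inv_nonneg.2 hu.1.le
  have := (intervalIntegral.integrableOn_Ioo_rpow_iff (s := -1) one_pos).1 <| by
    simpa only [Real.rpow_neg_one] using hi.mono_set Ioo_subset_Ioc_self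
  exact lt_irrefl _ this

/-- Sharpness of Theorem 3: `g(t) = t^{−1/p₀}` is non-increasing, integrable together
with `g^q`, satisfies the reverse Hölder inequality with exponent `q` and constant `c`
with equality on every `(0,t]`, but fails to lie in `L^{p₀}((0,1])`. -/
theorem reverse_holder_sharpness (q c p₀ : ℝ) (hq : 1 < q) (hc : 1 ≤ c) (hp₀ : q < p₀)
    (heq : (p₀ - q) / p₀ * (p₀ / (p₀ - 1)) ^ q * c = 1)
    (g : ℝ → ℝ≥0) (hg : g = fun t => Real.toNNReal (t ^ (-(1 / p₀)))) :
    AntitoneOn g (Set.Ioc (0 : ℝ) 1)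
    ∧ (∫⁻ u in Set.Ioc (0 : ℝ) 1, (g u : ℝ≥0∞)) ≠ ⊤
    ∧ (∫⁻ u in Set.Ioc (0 : ℝ) 1, ((g u : ℝ≥0∞)) ^ q) ≠ ⊤
    ∧ (∀ t ∈ Set.Ioc (0 : ℝ) 1,
        hardyAvg (fun u => g u ^ q) t = ENNReal.ofReal c * hardyAvg g t ^ q)
    ∧ (∫⁻ t in Set.Ioc (0 : ℝ) 1, (g t : ℝ≥0∞) ^ p₀) = ⊤ := by
  have hp : 0 < p₀ := by linarith
  have hs₁ : -1 < -(1 / p₀) := by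
    rw [neg_lt_neg_iff, div_lt_one hp]; linarith
  have hs₂ : -1 < -(1 / p₀) * q := by
    have : q / p₀ < 1 := (div_lt_one hp).2 hp₀
    have e : -(1 / p₀) * q = -(q / p₀) := by ring
    linarith
  have hg₁ : ∀ u, (g u : ℝ≥0∞) = ENNReal.ofReal (u ^ (-(1 / p₀))) := fun u => by
    rw [hg]; rfl
  have hgr : ∀ r : ℝ, 0 ≤ r → ∀ u, 0 < u →
      (g u : ℝ≥0∞) ^ r = ENNReal.ofReal (u ^ (-(1 / p₀) * r)) := fun r hr u hu => by
    rw [hg₁, ENNReal.ofReal_rpow_of_nonneg (Real.rpow_nonneg hu.le _) hr, Real.rpow_mul hu.le]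
  refine ⟨?_, ?_, ?_, ?_, ?_⟩
  · intro x hx y hy hxy
    rw [hg]
    refine Real.toNNReal_le_toNNReal (Real.rpow_le_rpow_of_nonpos hx.1 hxy ?_)
    have := one_div_pos.2 hp
    linarith
  · simp_rw [hg₁]
    rw [lintegral_Ioc_rpow hs₁ one_pos]
    exact ENNReal.ofReal_ne_top
  · rw [setLIntegral_congr_fun measurableSet_Ioc (fun u hu => hgr q (by linarith) u hu.1),
      lintegral_Ioc_rpow hs₂ one_pos]
    exact ENNReal.ofReal_ne_top
  · intro t ht
    have ht0 : 0 < t := ht.1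
    rw [hardyAvg_rpow hs₁ ht0 (fun u _ => hg₁ u),
      hardyAvg_rpow hs₂ ht0 (fun u hu => by
        rw [ENNReal.coe_rpow_of_nonneg _ (by linarith), hgr q (by linarith) u hu])]
    have h1 : 0 < -(1 / p₀) + 1 := by linarith
    have htp : 0 ≤ t ^ (-(1 / p₀)) := Real.rpow_nonneg ht0.le _
    rw [ENNReal.ofReal_rpow_of_nonneg (div_nonneg htp h1.le) (by linarith),
      ← ENNReal.ofReal_mul (by linarith)]
    congr 1
    have hA : t ^ (-(1 / p₀)) / (-(1 / p₀) + 1) = t ^ (-(1 / p₀)) * (p₀ / (p₀ - 1)) := by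
      have : p₀ - 1 ≠ 0 := by linarith
      have h2 : -(1 / p₀) + 1 = (p₀ - 1) / p₀ := by field_simp; ring
      rw [h2]; field_simp
    have hB : -(1 / p₀) * q + 1 = (p₀ - q) / p₀ := by field_simp; ring
    have hpos : 0 < (p₀ - q) / p₀ := div_pos (by linarith) hp
    rw [hA, hB, Real.mul_rpow htp (div_nonneg hp.le (by linarith)), ← Real.rpow_mul ht0.le,
      div_eq_iff hpos.ne']
    linear_combination (-(t ^ (-(1 / p₀) * q))) * heq
  · rw [setLIntegral_congr_fun measurableSet_Ioc (fun u hu => hgr p₀ hp.le u hu.1),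
      ← lintegral_Ioc_inv_eq_top]
    have e : -(1 / p₀) * p₀ = -1 := by field_simp
    simp_rw [e, Real.rpow_neg_one]
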